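/- Let d ≥ 2 be an integer, let f : S¹ → S¹ be a continuous degree-d map with lift F : ℝ → ℝ, and let β be a light semiconjugacy from f to the map m_d : θ ↦ dθ. Then the following are equivalent: (a) F is not injective; (b) β is not injective; (c) there exists a dense G_δ subset Λ ⊆ S¹ of full Lebesgue measure such that for every θ ∈ Λ the fiber β^{-1}(θ) is totally disconnected and uncountable (hence contains a Cantor set); (d) the topological entropy of f satisfies h_top(f) > log d; (e) for every nondegenerate closed arc J ⊆ S¹, the restriction of β to J is not of bounded variation. -/

import Mathlib

open MeasureTheory

/-!
After subtracting an integer from `F` we have `B ∘ F = d • B`. Since `B` has degree one, `B - id`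
is bounded, so `F^[n]` stays within bounded distance of `d ^ n • B`. If `B` is monotone, lightness
makes it strictly monotone; then `β` is a homeomorphism, `f` has the entropy of `θ ↦ dθ`, and `B`
has bounded variation. Otherwise `B` stretches some arc of length less than one over an interval
of length more than one. A high iterate `F^[n]` then covers more than `d ^ n` integer translates
of that arc by the arc itself: this is a horseshoe forcing entropy above `log d`, and it also
rules out bounded variation, because the short arc would carry the whole variation of `B` over a
period. Non-monotonicity moreover yields two disjoint arcs whose `B`-images overlap in an interval
`I`. For every `θ` whose orbit under multiplication by `d` visits `I` infinitely often, the
successive choices between the two arcs embed `{0, 1}^ℕ` into the fibre over `θ`; by ergodicity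
such `θ` form a `G_δ` set of full measure.
-/

section Orbits

open Function Set

lemma exists_orbit_segment_of_subset_image {X : ℕ → Type*} {g : ∀ n, X n → X (n + 1)}
    {K : ∀ n, Set (X n)} (hne : ∀ n, (K n).Nonempty) (hsub : ∀ n, K (n + 1) ⊆ g n '' K n)
    (n : ℕ) : ∀ y ∈ K n, ∃ x ∈ univ.pi K, (∀ i < n, x (i + 1) = g i (x i)) ∧ x n = y := by
  induction n with
  | zero =>
    choose x hx using hne
    refine fun y hy ↦ ⟨update x 0 y, fun i _ ↦ ?_, fun i hi ↦ absurd hi i.not_lt_zero,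
      update_self ..⟩
    rcases eq_or_ne i 0 with rfl | hi
    · simpa
    · simpa [hi] using hx i
  | succ n ih =>
    intro y hy
    obtain ⟨z, hz, rfl⟩ := hsub n hy
    obtain ⟨x, hxK, hx, rfl⟩ := ih z hz
    refine ⟨update x (n + 1) (g n (x n)), fun i _ ↦ ?_, fun i hi ↦ ?_, update_self ..⟩
    · rcases eq_or_ne i (n + 1) with rfl | hi
      · simpa
      · simpa [hi] using hxK i trivial
    · rcases (Nat.lt_succ_iff.1 hi).lt_or_eq with hi' | rfl
      · rw [update_of_ne (by lia), update_of_ne (by lia), hx i hi']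
      · simp

lemma exists_orbit_of_subset_image {X : ℕ → Type*} [∀ n, TopologicalSpace (X n)]
    [∀ n, T2Space (X n)] {g : ∀ n, X n → X (n + 1)} (hg : ∀ n, Continuous (g n))
    {K : ∀ n, Set (X n)} (hK : ∀ n, IsCompact (K n)) (hne : ∀ n, (K n).Nonempty)
    (hsub : ∀ n, K (n + 1) ⊆ g n '' K n) :
    ∃ x : ∀ n, X n, ∀ n, x n ∈ K n ∧ x (n + 1) = g n (x n) := by
  set S : ℕ → Set (∀ n, X n) := fun n ↦ {x | ∀ i < n, x (i + 1) = g i (x i)}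
  have hS (n) : IsClosed (S n) := by
    simp only [S, ofPred_forall]
    exact isClosed_iInter fun i ↦ isClosed_iInter fun _ ↦
      isClosed_eq (continuous_apply _) ((hg i).comp (continuous_apply i))
  have hpi : IsCompact (univ.pi K) := isCompact_univ_pi hK
  have hnonempty (n) : (univ.pi K ∩ S n).Nonempty :=
    let ⟨y, hy⟩ := hne n
    let ⟨x, hxK, hx, _⟩ := exists_orbit_segment_of_subset_image hne hsub n y hy
    ⟨x, hxK, hx⟩
  obtain ⟨x, hx⟩ := IsCompact.nonempty_iInter_of_sequence_nonempty_isCompact_isClosed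
    (fun n ↦ univ.pi K ∩ S n)
    (fun n ↦ inter_subset_inter_right _ fun x hx i hi ↦ hx i (hi.trans n.lt_succ_self))
    hnonempty (hpi.inter_right (hS 0)) (fun n ↦ hpi.isClosed.inter (hS n))
  rw [mem_iInter] at hx
  exact ⟨x, fun n ↦ ⟨(hx 0).1 n trivial, (hx (n + 1)).2 n n.lt_succ_self⟩⟩

end Orbits

section Entropy

open Dynamics ExpGrowth Function Set Topology Uniformity UniformSpace

variable {X : Type*}

lemma coverMincard_iterate_le (T : X → X) (F : Set X) (U : SetRel X X) {n : ℕ} (hn : n ≠ 0)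
    (m : ℕ) :
    coverMincard T^[n] F U m ≤ coverMincard T F U (n * m) := by
  have hsub : dynEntourage T U (n * m) ⊆ dynEntourage T^[n] U m := by
    rintro ⟨x, y⟩ hxy
    rw [mem_dynEntourage] at hxy ⊢
    intro k hk
    simpa only [← iterate_mul] using hxy (n * k) (Nat.mul_lt_mul_of_pos_left hk hn.bot_lt)
  exact iInf₂_mono' fun s hs ↦ ⟨s, hs.mono_entourage hsub, le_rfl⟩

lemma coverEntropy_iterate_le [UniformSpace X] (T : X → X) (F : Set X) {n : ℕ} (hn : n ≠ 0) :
    coverEntropy T^[n] F ≤ n * coverEntropy T F := by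
  refine iSup₂_le fun U hU ↦ ?_
  have hmono : Monotone fun m ↦ ((coverMincard T F U m : ℕ∞) : ENNReal) :=
    fun _ _ h ↦ ENat.toENNReal_mono (coverMincard_monotone_time T F U h)
  calc coverEntropyEntourage T^[n] F U
      ≤ expGrowthSup fun m ↦ (coverMincard T F U (n * m) : ENNReal) :=
        expGrowthSup_monotone fun m ↦ ENat.toENNReal_mono (coverMincard_iterate_le T F U hn m)
    _ = n * coverEntropyEntourage T F U := hmono.expGrowthSup_comp_mul hn
    _ ≤ n * coverEntropy T F := by gcongr; exact coverEntropyEntourage_le_coverEntropy T F hU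

lemma coverEntropy_le_of_semiconj_of_injective {Y : Type*} [UniformSpace X] [CompactSpace X]
    [UniformSpace Y] [T2Space Y] {S : X → X} {T : Y → Y} {φ : X → Y} (hφ : Continuous φ)
    (hinj : Injective φ) (h : Semiconj φ S T) : coverEntropy S univ ≤ coverEntropy T univ := by
  have hcomap : UniformSpace.comap φ ‹_› = ‹UniformSpace X› :=
    unique_uniformity_of_compact (hφ.isClosedEmbedding hinj).eq_induced.symm rfl
  have himage := coverEntropy_image_of_comap ‹UniformSpace Y› h univ
  rw [hcomap] at himage
  exact himage ▸ coverEntropy_monotone T (subset_univ _)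

lemma exists_uniform_thickening_of_pairwise_disjoint [UniformSpace X] [T2Space X] {ι : Type*}
    [Finite ι] {K : ι → Set X} (hK : ∀ i, IsCompact (K i)) (hdisj : Pairwise (Disjoint on K)) :
    ∃ V ∈ 𝓤 X, Pairwise (Disjoint on fun i ↦ ⋃ x ∈ K i, ball x V) := by
  choose! V hV hdisjV using fun i j (hij : i ≠ j) ↦
    (hdisj hij).exists_uniform_thickening (hK i) (hK j).isClosed
  refine ⟨⋂ i, ⋂ j, ⋂ _ : i ≠ j, V i j, ?_, fun i j hij ↦ (hdisjV i j hij).mono ?_ ?_⟩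
  · simpa [Filter.iInter_mem] using hV
  all_goals
    refine iUnion₂_mono fun x _ ↦ ball_mono ?_ x
    exact (iInter_subset _ i).trans <| (iInter_subset _ j).trans <| iInter_subset _ hij

lemma card_pow_le_netMaxcard (T : X → X) {ι : Type*} [Fintype ι] {K : ι → Set X} {V : SetRel X X}
    [V.IsRefl] (hV : Pairwise (Disjoint on fun i ↦ ⋃ x ∈ K i, ball x V)) {n : ℕ}
    (hword : ∀ w : Fin n → ι, ∃ x, ∀ k, T^[k] x ∈ K (w k)) :
    ((Fintype.card ι ^ n : ℕ) : ℕ∞) ≤ netMaxcard T univ V n := by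
  classical
  choose x hx using hword
  have hdisj (w w') (hne : w ≠ w') :
      Disjoint (ball (x w) (dynEntourage T V n)) (ball (x w') (dynEntourage T V n)) := by
    obtain ⟨k, hk⟩ := Function.ne_iff.1 hne
    refine disjoint_left.2 fun z hz hz' ↦ disjoint_left.1 (hV hk)
      (mem_iUnion₂_of_mem (hx w k) (mem_ball_dynEntourage.1 hz k k.2))
      (mem_iUnion₂_of_mem (hx w' k) (mem_ball_dynEntourage.1 hz' k k.2))
  have hinj : Injective x := fun w w' h ↦ by
    by_contra hne
    have hself : x w ∈ ball (x w) (dynEntourage T V n) :=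
      mem_ball_dynEntourage.2 fun _ _ ↦ SetRel.rfl V
    exact disjoint_left.1 (hdisj w w' hne) hself (h ▸ hself)
  have hnet : IsDynNetIn T univ V n (Finset.univ.image x : Finset X) := by
    rw [Finset.coe_image, Finset.coe_univ, image_univ]
    refine ⟨subset_univ _, ?_⟩
    rintro _ ⟨w, rfl⟩ _ ⟨w', rfl⟩ hne
    exact hdisj w w' fun h ↦ hne (h ▸ rfl)
  simpa [Finset.card_image_of_injective _ hinj] using hnet.card_le_netMaxcard

lemma log_card_le_coverEntropy_of_horseshoe [UniformSpace X] [T2Space X] {T : X → X}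
    (hT : Continuous T) {ι : Type*} [Fintype ι] {K : ι → Set X} (hK : ∀ i, IsCompact (K i))
    (hne : ∀ i, (K i).Nonempty) (hdisj : Pairwise (Disjoint on K))
    (hcover : ∀ i j, K j ⊆ T '' K i) :
    ENNReal.log (Fintype.card ι) ≤ coverEntropy T univ := by
  obtain ⟨V, hVu, hV⟩ := exists_uniform_thickening_of_pairwise_disjoint hK hdisj
  have := isRefl_of_mem_uniformity hVu
  rcases isEmpty_or_nonempty ι with _ | ⟨⟨i₀⟩⟩
  · simp
  have hword (n : ℕ) (w : Fin n → ι) : ∃ x, ∀ k, T^[k] x ∈ K (w k) := by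
    set w' : ℕ → ι := fun k ↦ if h : k < n then w ⟨k, h⟩ else i₀
    obtain ⟨x, hx⟩ := exists_orbit_of_subset_image (fun _ ↦ hT) (fun k ↦ hK (w' k))
      (fun k ↦ hne _) (fun k ↦ hcover _ _)
    have hiter (k : ℕ) : T^[k] (x 0) = x k := by
      induction k with
      | zero => rfl
      | succ k ih => rw [iterate_succ_apply', ih, (hx k).2]
    exact ⟨x 0, fun k ↦ by simpa [hiter, w'] using (hx k).1⟩
  calc ENNReal.log (Fintype.card ι)
      = expGrowthSup fun n ↦ (Fintype.card ι : ENNReal) ^ n := expGrowthSup_pow.symm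
    _ ≤ netEntropyEntourage T univ V := expGrowthSup_monotone fun n ↦ by
        simpa using ENat.toENNReal_mono (card_pow_le_netMaxcard T hV (hword n))
    _ ≤ coverEntropy T univ := netEntropyEntourage_le_coverEntropy T univ hVu

end Entropy

section CircleEntropy

open Dynamics ExpGrowth Filter Function Set Uniformity
open scoped NNReal

lemma exists_finset_forall_dist_le_one_div {n : ℕ} (hn : n ≠ 0) :
    ∃ s : Finset UnitAddCircle, s.card ≤ n ∧ ∀ x, ∃ y ∈ s, dist x y ≤ 1 / n := by
  classical
  have hn' : (0 : ℝ) < n := Nat.cast_pos.2 hn.bot_lt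
  refine ⟨(Finset.range n).image fun j : ℕ ↦ ((j / n : ℝ) : UnitAddCircle),
    Finset.card_image_le.trans_eq (Finset.card_range n), fun θ ↦ ?_⟩
  obtain ⟨x, ⟨hx₀, hx₁⟩, rfl⟩ : θ ∈ ((↑) '' Ico (0 : ℝ) (0 + 1) : Set UnitAddCircle) :=
    AddCircle.coe_image_Ico_eq (1 : ℝ) 0 ▸ mem_univ θ
  have hxn : 0 ≤ x * n := by positivity
  refine ⟨_, Finset.mem_image_of_mem _ (Finset.mem_range.2 ((Nat.floor_lt hxn).2 ?_)), ?_⟩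
  · nlinarith
  · have hfloor : |x * n - ⌊x * n⌋₊| ≤ 1 := by
      rw [abs_le]
      constructor <;> linarith [Nat.floor_le hxn, Nat.lt_floor_add_one (x * n)]
    calc dist (x : UnitAddCircle) ((⌊x * n⌋₊ / n : ℝ) : UnitAddCircle)
        ≤ |x - ⌊x * n⌋₊ / n| := by
          rw [dist_eq_norm, ← AddCircle.coe_sub]
          exact QuotientAddGroup.norm_mk_le_norm
      _ = |x * n - ⌊x * n⌋₊| / n := by
          rw [← abs_of_pos hn', ← abs_div, abs_of_pos hn', sub_div, mul_div_cancel_right₀ _ hn'.ne']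
      _ ≤ 1 / n := by gcongr

lemma coverMincard_le_of_lipschitzWith {f : UnitAddCircle → UnitAddCircle} {K : ℝ≥0}
    (hf : LipschitzWith K f) (hK : 1 ≤ K) {ε : ℝ} {M : ℕ} (hM : 1 / ε < M) (hε : 0 < ε) (n : ℕ) :
    (coverMincard f univ {p | dist p.1 p.2 < ε} n : ENNReal) ≤ (M + 1) * (K : ENNReal) ^ n := by
  have hM₀ : (0 : ℝ) < M := lt_trans (by positivity) hM
  have : 0 < K := one_pos.trans_le hK
  set N : ℕ := ⌈M * K ^ n⌉₊
  have hN : (M * K ^ n : ℝ) ≤ N := by exact_mod_cast Nat.le_ceil (M * K ^ n : ℝ≥0)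
  have hMK : (0 : ℝ) < M * K ^ n := by positivity
  have hN₀ : N ≠ 0 := fun h ↦ by simp [h] at hN; linarith
  obtain ⟨s, hcard, hs⟩ := exists_finset_forall_dist_le_one_div hN₀
  have hcover : IsDynCoverOf f univ {p | dist p.1 p.2 < ε} n s := fun x _ ↦ by
    obtain ⟨y, hys, hxy⟩ := hs x
    refine ⟨y, hys, mem_dynEntourage.2 fun k hk ↦ ?_⟩
    calc dist (f^[k] x) (f^[k] y) ≤ K ^ k * dist x y := by
          exact_mod_cast (hf.iterate k).dist_le_mul x y
      _ ≤ K ^ n * (1 / (M * K ^ n)) := by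
          have hle : dist x y ≤ 1 / (M * K ^ n) := hxy.trans (by gcongr)
          have hKpow : (K : ℝ) ^ k ≤ K ^ n := pow_le_pow_right₀ hK hk.le
          gcongr
      _ = 1 / M := by field_simp
      _ < ε := (one_div_lt hε hM₀).1 hM
  have hNle : (N : ℝ≥0) ≤ (M + 1) * K ^ n := calc
    (N : ℝ≥0) ≤ M * K ^ n + 1 := (Nat.ceil_lt_add_one zero_le).le
    _ ≤ M * K ^ n + K ^ n := by gcongr; exact one_le_pow₀ hK
    _ = (M + 1) * K ^ n := by ring
  calc (coverMincard f univ {p | dist p.1 p.2 < ε} n : ENNReal)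
      ≤ (N : ENNReal) := by
        simpa using ENat.toENNReal_mono (hcover.coverMincard_le_card.trans (Nat.cast_le.2 hcard))
    _ ≤ (M + 1) * (K : ENNReal) ^ n := by exact_mod_cast hNle

lemma coverEntropy_le_log_of_lipschitzWith {f : UnitAddCircle → UnitAddCircle} {K : ℝ≥0}
    (hf : LipschitzWith K f) (hK : 1 ≤ K) : coverEntropy f univ ≤ ENNReal.log K := by
  rw [coverEntropy_eq_iSup_basis Metric.uniformity_basis_dist, ← expGrowthSup_pow]
  refine iSup₂_le fun ε hε ↦ ?_
  obtain ⟨M, hM⟩ := exists_nat_gt (1 / ε)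
  exact expGrowthSup_le_of_eventually_le (b := M + 1) (by finiteness)
    (Eventually.of_forall (coverMincard_le_of_lipschitzWith hf hK hM hε))

lemma lipschitzWith_nsmul {E : Type*} [SeminormedAddCommGroup E] (n : ℕ) :
    LipschitzWith n (fun x : E ↦ n • x) :=
  LipschitzWith.of_dist_le_mul fun x y ↦ by
    simpa [dist_eq_norm, ← nsmul_sub] using norm_nsmul_le (n := n) (a := x - y)

end CircleEntropy

section Variation

open Function Set
open scoped AddConstMap

variable {E : Type*} [PseudoEMetricSpace E] {G : ℝ → ℝ} {u v : ℝ}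

/- The right inverse sends `w` to the first point at which `G` takes the value `w`. -/
lemma exists_monotoneOn_rightInvOn_Icc (huv : u ≤ v) (hG : ContinuousOn G (Icc u v)) :
    ∃ φ : ℝ → ℝ, MonotoneOn φ (Icc (G u) (G v)) ∧ MapsTo φ (Icc (G u) (G v)) (Icc u v) ∧
      RightInvOn φ G (Icc (G u) (G v)) := by
  set S : ℝ → Set ℝ := fun w ↦ Icc u v ∩ G ⁻¹' {w}
  have hne {w} (hw : w ∈ Icc (G u) (G v)) : (S w).Nonempty :=
    let ⟨x, hx, hxw⟩ := intermediate_value_Icc huv hG hw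
    ⟨x, hx, hxw⟩
  have hfirst {w} (hw : w ∈ Icc (G u) (G v)) : sInf (S w) ∈ S w :=
    (isCompact_Icc.of_isClosed_subset (hG.preimage_isClosed_of_isClosed isClosed_Icc
      isClosed_singleton) inter_subset_left).sInf_mem (hne hw)
  refine ⟨fun w ↦ sInf (S w), fun w hw w' hw' hle ↦ ?_, fun w hw ↦ (hfirst hw).1,
    fun w hw ↦ (hfirst hw).2⟩
  obtain ⟨⟨hu, hv⟩, hval⟩ := hfirst hw'
  obtain ⟨x, ⟨hux, hx⟩, rfl⟩ := intermediate_value_Icc hu (hG.mono (Icc_subset_Icc_right hv))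
    (show w ∈ Icc (G u) (G (sInf (S w'))) from ⟨hw.1, hle.trans_eq hval.symm⟩)
  exact (csInf_le (s := S _) ⟨u, fun y hy ↦ hy.1.1⟩ ⟨⟨hux, hx.trans hv⟩, rfl⟩).trans hx

lemma eVariationOn_Icc_le_comp_of_le (f : ℝ → E) (huv : u ≤ v) (hG : ContinuousOn G (Icc u v)) :
    eVariationOn f (Icc (G u) (G v)) ≤ eVariationOn (f ∘ G) (Icc u v) := by
  obtain ⟨φ, hmono, hmaps, hinv⟩ := exists_monotoneOn_rightInvOn_Icc huv hG
  calc eVariationOn f (Icc (G u) (G v)) = eVariationOn ((f ∘ G) ∘ φ) (Icc (G u) (G v)) :=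
        eVariationOn.congr fun w hw ↦ congrArg f (hinv hw).symm
    _ ≤ eVariationOn (f ∘ G) (Icc u v) := eVariationOn.comp_le_of_monotoneOn _ φ hmono hmaps

lemma eVariationOn_Icc_le_comp (f : ℝ → E) (hG : ContinuousOn G (Icc u v)) {x y : ℝ}
    (hx : x ∈ Icc u v) (hy : y ∈ Icc u v) :
    eVariationOn f (Icc (G x) (G y)) ≤ eVariationOn (f ∘ G) (Icc u v) := by
  rcases le_total x y with hxy | hyx
  · exact (eVariationOn_Icc_le_comp_of_le f hxy (hG.mono (Icc_subset_Icc hx.1 hy.2))).trans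
      (eVariationOn.mono _ (Icc_subset_Icc hx.1 hy.2))
  · have hmaps : MapsTo Neg.neg (Icc (-x) (-y)) (Icc u v) := fun z hz ↦
      ⟨hy.1.trans (le_neg.1 hz.2), (neg_le.1 hz.1).trans hx.2⟩
    calc eVariationOn f (Icc (G x) (G y))
        = eVariationOn f (Icc ((G ∘ Neg.neg) (-x)) ((G ∘ Neg.neg) (-y))) := by simp
      _ ≤ eVariationOn ((f ∘ G) ∘ Neg.neg) (Icc (-x) (-y)) :=
        eVariationOn_Icc_le_comp_of_le f (neg_le_neg hyx) (hG.comp continuousOn_neg hmaps)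
      _ ≤ eVariationOn (f ∘ G) (Icc u v) :=
        eVariationOn.comp_le_of_antitoneOn _ _ (fun _ _ _ _ h ↦ neg_le_neg h) hmaps

variable (B : ℝ →+c[1, 1] ℝ)

lemma eVariationOn_Icc_add_intCast (s t : ℝ) (k : ℤ) :
    eVariationOn B (Icc (s + k) (t + k)) = eVariationOn B (Icc s t) := calc
  eVariationOn B (Icc (s + k) (t + k)) = eVariationOn (B ∘ (· + (k : ℝ))) (Icc s t) := by
    rw [eVariationOn.comp_eq_of_monotoneOn _ _ fun _ _ _ _ h ↦ by gcongr, image_add_const_Icc]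
  _ = eVariationOn B (Icc s t) := by
    simp [eVariationOn, AddConstMapClass.map_add_int, edist_add_right]

lemma eVariationOn_Icc_add_natCast (a : ℝ) (n : ℕ) :
    eVariationOn B (Icc a (a + n)) = n * eVariationOn B (Icc a (a + 1)) := by
  induction n with
  | zero => simp
  | succ n ih =>
    have hadd := eVariationOn.Icc_add_Icc B (s := univ) (a := a) (b := a + n) (c := a + 1 + n)
      (by linarith [n.cast_nonneg (α := ℝ)]) (by linarith) trivial
    have hshift := eVariationOn_Icc_add_intCast B a (a + 1) n
    simp only [univ_inter, Int.cast_natCast] at hadd hshift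
    rw [Nat.cast_succ, Nat.cast_succ, add_comm (n : ℝ), ← add_assoc, ← hadd, ih, hshift, add_mul,
      one_mul]

lemma natCast_mul_eVariationOn_le (a : ℝ) {n : ℕ} {s t : ℝ} (hst : s + n + 1 ≤ t) :
    n * eVariationOn B (Icc a (a + 1)) ≤ eVariationOn B (Icc s t) := by
  rw [← eVariationOn_Icc_add_natCast, ← eVariationOn_Icc_add_intCast B _ _ ⌈s - a⌉]
  exact eVariationOn.mono _ (Icc_subset_Icc (by linarith [Int.le_ceil (s - a)])
    (by linarith [Int.ceil_lt_add_one (s - a)]))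

end Variation

/-- A map is light if its fibres are totally disconnected. Used for both the circle map `β` and its
lift `B` to the line, where it rules out intervals of constancy. -/
def IsLight {X Y : Type*} [TopologicalSpace X] (g : X → Y) : Prop :=
  ∀ y, IsTotallyDisconnected (g ⁻¹' {y})

section LightLine

open Set

lemma IsLight.exists_ne {Y : Type*} {g : ℝ → Y} (hg : IsLight g) {a b : ℝ} (hab : a < b) :
    ∃ x ∈ Icc a b, g x ≠ g a := by
  by_contra! hconst
  exact hab.ne (hg (g a) _ hconst isPreconnected_Icc (left_mem_Icc.2 hab.le)
    (right_mem_Icc.2 hab.le))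

lemma IsLight.strictMono {Y : Type*} [PartialOrder Y] {g : ℝ → Y} (hg : IsLight g)
    (hmono : Monotone g) : StrictMono g := fun _ _ hab ↦
  let ⟨_, hx, hne⟩ := hg.exists_ne hab
  ((hmono hx.1).lt_of_ne hne.symm).trans_le (hmono hx.2)

end LightLine

section DegreeMap

open Filter Function Set Topology
open scoped AddConstMap

lemma monotone_of_continuous_of_injective {c : ℝ} (hc : 0 < c) (G : ℝ →+c[1, c] ℝ)
    (hG : Continuous G) (hinj : Injective G) : Monotone G := by
  refine (hG.strictMono_of_inj hinj).elim StrictMono.monotone fun hanti ↦ ?_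
  have hlt : G (0 + 1) < G 0 := hanti (by norm_num)
  rw [AddConstMapClass.map_add_const] at hlt
  linarith

variable {c : ℝ} {F : ℝ → ℝ} {B : ℝ →+c[1, 1] ℝ}

lemma exists_abs_map_sub_self_le (hB : Continuous B) : ∃ C, ∀ x, |B x - x| ≤ C := by
  obtain ⟨C, hC⟩ := isCompact_Icc.exists_bound_of_continuousOn (s := Icc (0 : ℝ) 1)
    (hB.sub continuous_id).continuousOn
  refine ⟨C, fun x ↦ ?_⟩
  have hfract := hC (Int.fract x) ⟨Int.fract_nonneg x, (Int.fract_lt_one x).le⟩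
  rwa [Pi.sub_apply, AddConstMapClass.map_fract B x, id, ← Int.self_sub_floor, zsmul_one,
    sub_sub_sub_cancel_right, Real.norm_eq_abs] at hfract

lemma semiconj_iterate_mul (h : Semiconj B F (c * ·)) (n : ℕ) (x : ℝ) :
    B (F^[n] x) = c ^ n * B x := by
  simpa only [mul_left_iterate] using h.iterate_right n x

lemma exists_abs_iterate_sub_le (hB : Continuous B) (h : Semiconj B F (c * ·)) :
    ∃ C, ∀ n x, |F^[n] x - c ^ n * B x| ≤ C := by
  obtain ⟨C, hC⟩ := exists_abs_map_sub_self_le hB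
  refine ⟨C, fun n x ↦ ?_⟩
  rw [← semiconj_iterate_mul h, abs_sub_comm]
  exact hC _

lemma eventually_forall_iterate_le (hc : 1 < c) (hB : Continuous B) (h : Semiconj B F (c * ·))
    {e : ℝ} (he : 0 < e) (R : ℝ) :
    ∀ᶠ n in atTop, ∀ x T,
      (T + e ≤ B x → c ^ n * T + R ≤ F^[n] x) ∧ (B x ≤ T - e → F^[n] x ≤ c ^ n * T - R) := by
  obtain ⟨C, hC⟩ := exists_abs_iterate_sub_le hB h
  filter_upwards [((tendsto_pow_atTop_atTop_of_one_lt hc).atTop_mul_const he).eventually_ge_atTop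
    (C + R)] with n hn x T
  have hpow : 0 < c ^ n := by positivity
  have hclose := abs_le.1 (hC n x)
  constructor <;> intro hx <;> nlinarith [mul_le_mul_of_nonneg_left hx hpow.le]

lemma eventually_iterate_add_le (hc : 1 < c) (hB : Continuous B) (h : Semiconj B F (c * ·))
    {a b t : ℝ} (hab : B a + t < B b) (R : ℝ) :
    ∀ᶠ n in atTop, F^[n] a + c ^ n * t + R ≤ F^[n] b := by
  obtain ⟨e, he, hmid⟩ : ∃ e > 0, B a + e + t + e = B b :=
    ⟨(B b - B a - t) / 2, by linarith, by ring⟩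
  filter_upwards [eventually_forall_iterate_le hc hB h he (R / 2)] with n hn
  have ha := (hn a (B a + e)).2 (by linarith)
  have hb := (hn b (B a + e + t)).1 hmid.le
  rw [mul_add _ _ t] at hb
  linarith

lemma eventually_Icc_subset_image_iterate (hc : 1 < c) (hF : Continuous F) (hB : Continuous B)
    (h : Semiconj B F (c * ·)) {e : ℝ} (he : 0 < e) (R : ℝ) :
    ∀ᶠ n in atTop, ∀ J : Set ℝ, IsPreconnected J → ∀ T, T - e ∈ B '' J → T + e ∈ B '' J →
      Icc (c ^ n * T - R) (c ^ n * T + R) ⊆ F^[n] '' J := by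
  filter_upwards [eventually_forall_iterate_le hc hB h he R] with n hn
  rintro J hJ T ⟨x, hx, hxT⟩ ⟨y, hy, hyT⟩
  exact (Icc_subset_Icc ((hn x T).2 hxT.le) ((hn y T).1 hyT.ge)).trans
    (hJ.intermediate_value hx hy (hF.iterate n).continuousOn)

lemma surjective_of_continuous (hB : Continuous B) : Surjective B := by
  obtain ⟨C, hC⟩ := exists_abs_map_sub_self_le hB
  intro y
  exact mem_range_of_exists_le_of_exists_ge hB ⟨y - C, by linarith [(abs_le.1 (hC (y - C))).2]⟩
    ⟨y + C, by linarith [(abs_le.1 (hC (y + C))).1]⟩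

lemma surjective_of_semiconj (hc : 1 < c) (hF : Continuous F) (hB : Continuous B)
    (h : Semiconj B F (c * ·)) : Surjective F := by
  intro y
  obtain ⟨n, hcover⟩ := ((tendsto_add_atTop_nat 1).eventually
    (eventually_Icc_subset_image_iterate hc hF hB h one_pos |y|)).exists
  have hy : y ∈ F^[n + 1] '' univ := hcover univ isPreconnected_univ 0
    (image_univ ▸ surjective_of_continuous hB _) (image_univ ▸ surjective_of_continuous hB _)
    (by simpa using abs_le.1 le_rfl)
  obtain ⟨x, -, rfl⟩ := hy
  exact ⟨F^[n] x, (iterate_succ_apply' F n x).symm⟩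

lemma map_eq_of_frequently_abs_iterate_sub_le (hc : 1 < c) (hB : Continuous B)
    (h : Semiconj B F (c * ·)) {u T R : ℝ} (hu : ∃ᶠ n in atTop, |F^[n] u - c ^ n * T| ≤ R) :
    B u = T := by
  by_contra hne
  refine hu ?_
  filter_upwards [eventually_forall_iterate_le hc hB h (abs_pos.2 (sub_ne_zero.2 hne)) (R + 1)]
    with n hn habs
  rw [abs_le] at habs
  rcases lt_or_gt_of_ne hne with hlt | hlt
  · linarith [(hn u T).2 (by rw [abs_of_neg (sub_neg.2 hlt)]; linarith)]
  · linarith [(hn u T).1 (by rw [abs_of_pos (sub_pos.2 hlt)]; linarith)]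

lemma monotone_of_semiconj (hc : 1 < c) (hB : Continuous B) (h : Semiconj B F (c * ·))
    (hF : Monotone F) : Monotone B := by
  intro x y hxy
  by_contra! hlt
  obtain ⟨n, hn⟩ :=
    (eventually_iterate_add_le hc hB h (a := y) (b := x) (t := 0) (by linarith) 1).exists
  linarith [hF.iterate n hxy]

lemma injective_iff_monotone (hB : Continuous B) (hlight : IsLight B) : Injective B ↔ Monotone B :=
  ⟨monotone_of_continuous_of_injective one_pos B hB, fun h ↦ (hlight.strictMono h).injective⟩

lemma injective_iff_monotone_of_semiconj (hc : 1 < c) (F : ℝ →+c[1, c] ℝ) (hF : Continuous F)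
    (hB : Continuous B) (hlight : IsLight B) (h : Semiconj B F (c * ·)) :
    Injective F ↔ Monotone B := by
  refine ⟨fun hinj ↦ monotone_of_semiconj hc hB h
    (monotone_of_continuous_of_injective (by linarith) F hF hinj), fun hmono x y hxy ↦ ?_⟩
  have hBxy : c * B x = c * B y := (h x).symm.trans ((congrArg B hxy).trans (h y))
  exact (hlight.strictMono hmono).injective (mul_left_cancel₀ (by linarith) hBxy)

end DegreeMap

section Folding

open Filter Function Set Topology
open scoped AddConstMap

variable {c : ℝ} {F : ℝ → ℝ} {B : ℝ →+c[1, 1] ℝ}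

lemma exists_lt_map_lt_of_not_monotone (hmono : ¬ Monotone B) :
    ∃ x y, x < y ∧ y < x + 1 ∧ B y < B x := by
  rw [AddConstMapClass.monotone_iff_Icc zero_lt_one 0] at hmono
  simp only [MonotoneOn, not_forall, not_le] at hmono
  obtain ⟨x, hx, y, hy, hxy, hlt⟩ := hmono
  refine ⟨x, y, hxy.lt_of_ne fun h ↦ hlt.ne (h ▸ rfl), lt_of_le_of_ne (by linarith [hx.1, hy.2])
    fun h ↦ ?_, hlt⟩
  rw [h, AddConstMapClass.map_add_const] at hlt
  linarith

lemma exists_map_add_one_lt_of_not_monotone (hB : Continuous B) (hmono : ¬ Monotone B) :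
    ∃ a b, a < b ∧ b < a + 1 ∧ B a + 1 < B b := by
  obtain ⟨x, y, hxy, hyx, hlt⟩ := exists_lt_map_lt_of_not_monotone hmono
  have hend : B y + 1 < B (x + 1) := by rw [AddConstMapClass.map_add_const]; linarith
  obtain ⟨b, hb, hyb, hbx⟩ := (((hB.tendsto (x + 1)).eventually_const_lt hend).filter_mono
    nhdsWithin_le_nhds |>.and (Ioo_mem_nhdsLT hyx)).exists
  exact ⟨y, b, hyb, by linarith, hb⟩

lemma exists_disjoint_overlapping_branches (hB : Continuous B) (hmono : ¬ Monotone B) :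
    ∃ p q, p < q ∧ ∃ J : Bool → Set ℝ, Pairwise (Disjoint on J) ∧
      ∀ i, IsCompact (J i) ∧ IsPreconnected (J i) ∧ Icc p q ⊆ B '' J i := by
  obtain ⟨x, y, hxy, hyx, hlt⟩ := exists_lt_map_lt_of_not_monotone hmono
  obtain ⟨m, hm⟩ := exists_between hlt
  obtain ⟨t, ⟨hxt, hty⟩, rfl⟩ := intermediate_value_Ioo' hxy.le hB.continuousOn hm
  refine ⟨B t, B x, hm.2, fun i ↦ cond i (Icc x t) (Icc y (x + 1)),
    pairwise_disjoint_on_bool.2 ?_, Bool.forall_bool.2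
    ⟨⟨isCompact_Icc, isPreconnected_Icc, ?_⟩, isCompact_Icc, isPreconnected_Icc, ?_⟩⟩
  · exact disjoint_left.2 fun z hz hz' ↦ by linarith [hz.2, hz'.1]
  · refine (Icc_subset_Icc hm.1.le ?_).trans (intermediate_value_Icc hyx.le hB.continuousOn)
    rw [AddConstMapClass.map_add_const]
    linarith
  · exact intermediate_value_Icc' hxt.le hB.continuousOn

end Folding

section Fibers

open Filter Function Set Topology
open scoped AddConstMap

variable {c : ℝ} {F : ℝ → ℝ} {B : ℝ →+c[1, 1] ℝ}

lemma exists_mem_fiber_forall_iterate_mem (hc : 1 < c) (hF : Continuous F) (hB : Continuous B)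
    (h : Semiconj B F (c * ·)) {e : ℝ} (he : 0 < e) (R : ℝ) :
    ∃ n₀ : ℕ, ∀ (T : ℝ) (τ : ℕ → ℕ) (K : ℕ → Set ℝ), (∀ i, τ i + n₀ ≤ τ (i + 1)) →
      (∀ i, IsCompact (K i)) → (∀ i, IsPreconnected (K i)) →
      (∀ i, c ^ τ i * T - e ∈ B '' K i) → (∀ i, c ^ τ i * T + e ∈ B '' K i) →
      (∀ i, ∀ z ∈ K i, |z - c ^ τ i * T| ≤ R) →
      ∃ u, B u = T ∧ ∀ i, F^[τ i] u ∈ K i := by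
  obtain ⟨n₀, hn₀⟩ := eventually_atTop.1 (eventually_Icc_subset_image_iterate hc hF hB h he R)
  refine ⟨n₀ + 1, fun T τ K hτ hKc hKp hleft hright hbdd ↦ ?_⟩
  have hsub (i) : K (i + 1) ⊆ F^[τ (i + 1) - τ i] '' K i := by
    refine fun z hz ↦ hn₀ _ (by have := hτ i; lia) (K i) (hKp i) _ (hleft i) (hright i) ?_
    rw [← mul_assoc, ← pow_add, Nat.sub_add_cancel (by have := hτ i; lia)]
    have := abs_le.1 (hbdd (i + 1) z hz)
    constructor <;> linarith
  obtain ⟨x, hx⟩ := exists_orbit_of_subset_image (fun i ↦ hF.iterate (τ (i + 1) - τ i)) hKc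
    (fun i ↦ image_nonempty.1 ⟨_, hleft i⟩) hsub
  obtain ⟨u, hu⟩ := (surjective_of_semiconj hc hF hB h).iterate (τ 0) (x 0)
  have hiter (i) : F^[τ i] u = x i := by
    induction i with
    | zero => exact hu
    | succ i ih =>
      rw [(hx i).2, ← ih, ← iterate_add_apply, Nat.sub_add_cancel (by have := hτ i; lia)]
  have hmem (i) : F^[τ i] u ∈ K i := hiter i ▸ (hx i).1
  have hτ_mono : StrictMono τ := strictMono_nat_of_lt_succ fun i ↦ by have := hτ i; lia
  refine ⟨u, map_eq_of_frequently_abs_iterate_sub_le hc hB h (R := R) ?_, hmem⟩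
  exact hτ_mono.tendsto_atTop.frequently (Frequently.of_forall fun i ↦ hbdd i _ (hmem i))

lemma exists_forall_code_exists_mem_fiber (hc : 1 < c) (hF : Continuous F) (hB : Continuous B)
    (h : Semiconj B F (c * ·)) {p q : ℝ} {ι : Type*} [Finite ι] {J : ι → Set ℝ}
    (hJ : ∀ i, IsCompact (J i) ∧ IsPreconnected (J i) ∧ Icc p q ⊆ B '' J i) {e : ℝ} (he : 0 < e)
    {T : ℝ} (hT : ∃ᶠ n in atTop, ∃ k : ℤ, c ^ n * T - k ∈ Icc (p + e) (q - e)) :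
    ∃ (τ : ℕ → ℕ) (k : ℕ → ℤ), ∀ ω : ℕ → ι, ∃ u, B u = T ∧ ∀ i, F^[τ i] u - k i ∈ J (ω i) := by
  obtain ⟨R, hR⟩ : ∃ R, ∀ i, ∀ z ∈ J i, ∀ w ∈ Icc p q, |z - w| ≤ R := by
    have hbdd : Bornology.IsBounded ((⋃ i, J i) ∪ Icc p q) :=
      ((isCompact_iUnion fun i ↦ (hJ i).1).union isCompact_Icc).isBounded
    obtain ⟨R, hR⟩ := Metric.isBounded_iff.1 hbdd
    exact ⟨R, fun i z hz w hw ↦ hR (.inl (mem_iUnion_of_mem i hz)) (.inr hw)⟩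
  obtain ⟨n₀, hn₀⟩ := exists_mem_fiber_forall_iterate_mem hc hF hB h he R
  obtain ⟨φ, hφ, hret⟩ := extraction_of_frequently_atTop hT
  choose k hk using hret
  refine ⟨fun i ↦ φ (i * n₀), fun i ↦ k (i * n₀), fun ω ↦ ?_⟩
  have himage (i : ℕ) (w : ℝ) (hw : w - k (i * n₀) ∈ Icc p q) :
      w ∈ B '' ((· + (k (i * n₀) : ℝ)) '' J (ω i)) := by
    obtain ⟨z, hz, hzw⟩ := (hJ (ω i)).2.2 hw
    exact ⟨_, mem_image_of_mem _ hz, by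
      rw [AddConstMapClass.map_add_int, hzw, sub_add_cancel]⟩
  have hgap (i : ℕ) : φ (i * n₀) + n₀ ≤ φ ((i + 1) * n₀) := by
    rw [add_mul, one_mul, add_comm, add_comm (i * n₀)]
    exact hφ.add_le_nat n₀ (i * n₀)
  have hbdd (i : ℕ) (z) (hz : z ∈ (· + (k (i * n₀) : ℝ)) '' J (ω i)) :
      |z - c ^ φ (i * n₀) * T| ≤ R := by
    obtain ⟨z, hz, rfl⟩ := hz
    rw [add_sub_right_comm, sub_add]
    exact hR _ z hz _ ⟨by linarith [(hk (i * n₀)).1], by linarith [(hk (i * n₀)).2]⟩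
  obtain ⟨u, hu, hmem⟩ := hn₀ T _ _ hgap (fun i ↦ (hJ _).1.image (by fun_prop))
    (fun i ↦ (hJ _).2.1.image _ (by fun_prop))
    (fun i ↦ himage i _ ⟨by linarith [(hk (i * n₀)).1], by linarith [(hk (i * n₀)).2]⟩)
    (fun i ↦ himage i _ ⟨by linarith [(hk (i * n₀)).1], by linarith [(hk (i * n₀)).2]⟩) hbdd
  refine ⟨u, hu, fun i ↦ ?_⟩
  obtain ⟨z, hz, hzu⟩ := hmem i
  rwa [← hzu, add_sub_cancel_right]

lemma not_countable_fiber_of_frequently (hc : 1 < c) (hF : Continuous F) (hB : Continuous B)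
    (h : Semiconj B F (c * ·)) {p q : ℝ} {J : Bool → Set ℝ} (hdisj : Pairwise (Disjoint on J))
    (hJ : ∀ i, IsCompact (J i) ∧ IsPreconnected (J i) ∧ Icc p q ⊆ B '' J i) {e : ℝ} (he : 0 < e)
    {T : ℝ} (hT : ∃ᶠ n in atTop, ∃ k : ℤ, c ^ n * T - k ∈ Icc (p + e) (q - e)) :
    ¬ (B ⁻¹' {T}).Countable := by
  obtain ⟨τ, k, hcode⟩ := exists_forall_code_exists_mem_fiber hc hF hB h hJ he hT
  choose u hu hmem using hcode
  have hinj : Injective u := fun ω ω' heq ↦ by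
    ext1 i
    by_contra hne
    exact disjoint_left.1 (hdisj hne) (hmem ω i) (heq ▸ hmem ω' i)
  intro hcount
  have hcodes : Countable (ℕ → Bool) :=
    countable_univ_iff.1 (MapsTo.countable_of_injOn (fun ω _ ↦ hu ω) hinj.injOn hcount)
  rw [← Cardinal.mk_le_aleph0_iff] at hcodes
  simp [Cardinal.aleph0_lt_continuum.not_ge] at hcodes

end Fibers

section BoundedVariation

open Filter Function Set
open scoped AddConstMap

variable {d : ℕ} {F : ℝ → ℝ} {B : ℝ →+c[1, 1] ℝ}

lemma eVariationOn_comp_iterate_le (h : Semiconj B F (d * ·)) (n : ℕ) (s : Set ℝ) :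
    eVariationOn (B ∘ F^[n]) s ≤ d ^ n * eVariationOn B s := by
  have hcomp : B ∘ F^[n] = (d ^ n • ·) ∘ B :=
    funext fun x ↦ by simpa using semiconj_iterate_mul h n x
  rw [hcomp]
  exact_mod_cast (lipschitzWith_nsmul (E := ℝ) (d ^ n)).lipschitzOnWith.comp_eVariationOn_le
    (mapsTo_univ B s)

lemma natCast_mul_eVariationOn_unit_le (hF : Continuous F) (h : Semiconj B F (d * ·)) (x₀ : ℝ)
    {u v x y : ℝ} (hx : x ∈ Icc u v) (hy : y ∈ Icc u v) {m n : ℕ}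
    (hxy : F^[n] x + m + 1 ≤ F^[n] y) :
    m * eVariationOn B (Icc x₀ (x₀ + 1)) ≤ d ^ n * eVariationOn B (Icc u v) := calc
  _ ≤ eVariationOn B (Icc (F^[n] x) (F^[n] y)) := natCast_mul_eVariationOn_le B x₀ hxy
  _ ≤ eVariationOn (B ∘ F^[n]) (Icc u v) :=
    eVariationOn_Icc_le_comp B (hF.iterate n).continuousOn hx hy
  _ ≤ d ^ n * eVariationOn B (Icc u v) := eVariationOn_comp_iterate_le h n _

lemma boundedVariationOn_unit_of_boundedVariationOn (hd : 1 < d) (hF : Continuous F)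
    (hB : Continuous B) (h : Semiconj B F (d * ·)) (hlight : IsLight B) (x₀ : ℝ) {u v : ℝ}
    (huv : u < v) (hbv : BoundedVariationOn B (Icc u v)) :
    BoundedVariationOn B (Icc x₀ (x₀ + 1)) := by
  obtain ⟨x, hx, y, hy, hlt⟩ : ∃ x ∈ Icc u v, ∃ y ∈ Icc u v, B x < B y := by
    obtain ⟨z, hz, hne⟩ := hlight.exists_ne huv
    have hu : u ∈ Icc u v := left_mem_Icc.2 huv.le
    exact hne.lt_or_gt.elim (fun hlt ↦ ⟨z, hz, u, hu, hlt⟩) fun hlt ↦ ⟨u, hu, z, hz, hlt⟩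
  obtain ⟨n, hn⟩ := (eventually_iterate_add_le (c := d) (a := x) (b := y) (t := 0)
    (by exact_mod_cast hd) hB h (by linarith) 2).exists
  have hle := natCast_mul_eVariationOn_unit_le hF h x₀ hx hy (m := 1) (n := n)
    (by push_cast; linarith)
  rw [Nat.cast_one, one_mul] at hle
  exact ne_top_of_le_ne_top (ENNReal.mul_ne_top (by finiteness) hbv) hle

lemma monotone_of_boundedVariationOn (hd : 1 < d) (hF : Continuous F) (hB : Continuous B)
    (h : Semiconj B F (d * ·)) (hlight : IsLight B) {u v : ℝ} (huv : u < v)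
    (hbv : BoundedVariationOn B (Icc u v)) : Monotone B := by
  by_contra hmono
  obtain ⟨a, b, hab, hba, hlt⟩ := exists_map_add_one_lt_of_not_monotone hB hmono
  have hfin := boundedVariationOn_unit_of_boundedVariationOn hd hF hB h hlight a huv hbv
  -- a high iterate wraps the short arc more than `d ^ n` times, so the arc carries all variation
  have hle : eVariationOn B (Icc a (a + 1)) ≤ eVariationOn B (Icc a b) := by
    obtain ⟨n, hn⟩ :=
      (eventually_iterate_add_le (c := d) (by exact_mod_cast hd) hB h hlt 1).exists
    have hmul := natCast_mul_eVariationOn_unit_le hF h a (left_mem_Icc.2 hab.le)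
      (right_mem_Icc.2 hab.le) (m := d ^ n) (n := n) (by push_cast; linarith)
    push_cast at hmul
    exact (ENNReal.mul_le_mul_iff_right (by positivity) (by finiteness)).1 hmul
  have hadd := eVariationOn.Icc_add_Icc B (s := univ) hab.le hba.le trivial
  simp only [univ_inter] at hadd
  have hzero : eVariationOn B (Icc b (a + 1)) = 0 := by
    have hfin' : eVariationOn B (Icc a b) ≠ ⊤ :=
      ne_top_of_le_ne_top hfin (eVariationOn.mono _ (Icc_subset_Icc_right hba.le))
    refine nonpos_iff_eq_zero.1 ((ENNReal.add_le_add_iff_left hfin').1 ?_)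
    rwa [hadd, add_zero]
  obtain ⟨x, hx, hne⟩ := hlight.exists_ne hba
  exact hne (edist_eq_zero.1
    ((eVariationOn.eq_zero_iff B).1 hzero x hx b (left_mem_Icc.2 hba.le)))

lemma monotone_iff_exists_boundedVariationOn (hd : 1 < d) (hF : Continuous F) (hB : Continuous B)
    (h : Semiconj B F (d * ·)) (hlight : IsLight B) :
    Monotone B ↔ ∃ a b, a < b ∧ b - a ≤ 1 ∧ BoundedVariationOn B (Icc a b) := by
  refine ⟨fun hmono ↦ ⟨0, 1, one_pos, by simp, ?_⟩,
    fun ⟨a, b, hab, _, hbv⟩ ↦ monotone_of_boundedVariationOn hd hF hB h hlight hab hbv⟩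
  simpa using (hmono.monotoneOn univ).locallyBoundedVariationOn 0 1 trivial trivial

end BoundedVariation

section Lifts

open Function Set
open scoped AddConstMap

lemma coe_unitAddCircle_eq_coe_iff {x y : ℝ} :
    (x : UnitAddCircle) = y ↔ ∃ k : ℤ, x = y + k := by
  rw [← sub_eq_zero, ← AddCircle.coe_sub, AddCircle.coe_eq_zero_iff]
  exact exists_congr fun k ↦ by rw [zsmul_one, eq_comm, sub_eq_iff_eq_add']

lemma coe_add_intCast_unitAddCircle (x : ℝ) (k : ℤ) : ((x + k : ℝ) : UnitAddCircle) = x :=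
  coe_unitAddCircle_eq_coe_iff.2 ⟨k, rfl⟩

lemma injOn_coe_unitAddCircle_Icc {a b : ℝ} (hb : b < a + 1) :
    InjOn ((↑) : ℝ → UnitAddCircle) (Icc a b) := fun _ hx _ hy ↦
  (AddCircle.coe_eq_coe_iff_of_mem_Ico (Icc_subset_Ico_right hb hx)
    (Icc_subset_Ico_right hb hy)).1

lemma exists_forall_eq_intCast_of_continuous {X : Type*} [TopologicalSpace X] [PreconnectedSpace X]
    {g : X → ℝ} (hg : Continuous g) (hint : ∀ x, ∃ k : ℤ, g x = k) : ∃ k : ℤ, ∀ x, g x = k := by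
  obtain ⟨_, ⟨k, rfl⟩, hk⟩ := isPreconnected_univ.eqOn_const_of_mapsTo (T := range Int.cast)
    Int.isClosedEmbedding_coe_real.isEmbedding.isDiscrete_range hg.continuousOn
    (fun x _ ↦ (hint x).imp fun _ ↦ Eq.symm) (range_nonempty _)
  exact ⟨k, fun x ↦ hk (mem_univ x)⟩

variable {β f : UnitAddCircle → UnitAddCircle} {B : ℝ →+c[1, 1] ℝ}

lemma injOn_coe_fiber (y : ℝ) : InjOn ((↑) : ℝ → UnitAddCircle) (B ⁻¹' {y}) := by
  intro x hx x' hx' heq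
  obtain ⟨k, rfl⟩ := coe_unitAddCircle_eq_coe_iff.1 heq
  rw [mem_preimage, AddConstMapClass.map_add_int, mem_singleton_iff.1 hx'] at hx
  simpa using hx

lemma mapsTo_coe_fiber (hlift : Semiconj ((↑) : ℝ → UnitAddCircle) B β) (y : ℝ) :
    MapsTo ((↑) : ℝ → UnitAddCircle) (B ⁻¹' {y}) (β ⁻¹' {(y : UnitAddCircle)}) :=
  fun x hx ↦ (hlift x).symm.trans (congrArg _ hx)

lemma IsLight.of_lift (hβ : IsLight β) (hlift : Semiconj ((↑) : ℝ → UnitAddCircle) B β) :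
    IsLight B := fun y _ hs hpre _ hx _ hx' ↦
  injOn_coe_fiber y (hs hx) (hs hx') <|
    hβ y _ ((mapsTo_coe_fiber hlift y).mono_left hs).image_subset
      (hpre.image _ (AddCircle.continuous_mk' 1).continuousOn) (mem_image_of_mem _ hx)
      (mem_image_of_mem _ hx')

lemma injective_iff_injective_lift (hlift : Semiconj ((↑) : ℝ → UnitAddCircle) B β) :
    Injective β ↔ Injective B := by
  refine ⟨fun hinj x y hxy ↦ ?_, fun hinj θ η hθη ↦ ?_⟩
  · exact injOn_coe_fiber (B y) hxy rfl
      (hinj ((hlift x).symm.trans ((congrArg _ hxy).trans (hlift y))))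
  · obtain ⟨x, rfl⟩ := QuotientAddGroup.mk_surjective θ
    obtain ⟨y, rfl⟩ := QuotientAddGroup.mk_surjective η
    obtain ⟨k, hk⟩ :=
      coe_unitAddCircle_eq_coe_iff.1 ((hlift x).trans (hθη.trans (hlift y).symm))
    rw [← AddConstMapClass.map_add_int B] at hk
    exact coe_unitAddCircle_eq_coe_iff.2 ⟨k, hinj hk⟩

lemma exists_lift_semiconj {d : ℕ} (F : ℝ →+c[1, (d : ℝ)] ℝ) (hF : Continuous F)
    (hFlift : Semiconj ((↑) : ℝ → UnitAddCircle) F f) (hB : Continuous B)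
    (hBlift : Semiconj ((↑) : ℝ → UnitAddCircle) B β) (h : Semiconj β f (d • ·)) :
    ∃ F₀ : ℝ →+c[1, (d : ℝ)] ℝ, Continuous F₀ ∧
      Semiconj ((↑) : ℝ → UnitAddCircle) F₀ f ∧ Semiconj B F₀ (d * ·) ∧
      (Injective F₀ ↔ Injective F) := by
  obtain ⟨k, hk⟩ : ∃ k : ℤ, ∀ x, B (F x) - d * B x = k := by
    refine exists_forall_eq_intCast_of_continuous (by fun_prop) fun x ↦ ?_
    obtain ⟨k, hk⟩ : ∃ k : ℤ, B (F x) = d • B x + k := by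
      refine coe_unitAddCircle_eq_coe_iff.1 ?_
      rw [AddCircle.coe_nsmul]
      exact (hBlift _).trans ((congrArg β (hFlift x)).trans ((h x).trans
        (congrArg (d • ·) (hBlift x).symm)))
    exact ⟨k, by rw [hk, nsmul_eq_mul, add_sub_cancel_left]⟩
  refine ⟨⟨fun x ↦ F x - k, fun x ↦ ?_⟩, hF.sub continuous_const, fun x ↦ ?_, fun x ↦ ?_, ?_⟩
  · rw [AddConstMapClass.map_add_const, add_sub_right_comm]
  · refine Eq.trans ?_ (hFlift x)
    exact coe_unitAddCircle_eq_coe_iff.2 ⟨-k, by push_cast; rfl⟩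
  · exact (AddConstMapClass.map_sub_int B (F x) k).trans (by linarith [hk x])
  · exact (sub_left_injective (b := (k : ℝ))).of_comp_iff F

end Lifts

section CircleHorseshoe

open Dynamics Filter Function Set
open scoped AddConstMap

lemma log_card_le_coverEntropy_of_Icc_subset_image {g : UnitAddCircle → UnitAddCircle}
    (hg : Continuous g) {G : ℝ → ℝ} (hG : Continuous G)
    (hlift : Semiconj ((↑) : ℝ → UnitAddCircle) G g) {a b : ℝ} (hab : a ≤ b)
    (hb : b < a + 1) {s : Finset ℤ} (hs : ∀ m ∈ s, Icc (a + m) (b + m) ⊆ G '' Icc a b) :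
    ENNReal.log s.card ≤ coverEntropy g univ := by
  set A : s → Set ℝ := fun m ↦ Icc a b ∩ G ⁻¹' Icc (a + m) (b + m)
  have hcover (m : s) (y : ℝ) (hy : y ∈ Icc a b) : ∃ x ∈ A m, G x = y + m := by
    have hym : y + m ∈ Icc (a + m) (b + m) := by simpa using hy
    obtain ⟨x, hx, hxy⟩ := hs m m.2 hym
    exact ⟨x, ⟨hx, mem_preimage.2 (hxy ▸ hym)⟩, hxy⟩
  rw [← Fintype.card_coe]
  refine log_card_le_coverEntropy_of_horseshoe (K := fun m ↦ ((↑) : ℝ → UnitAddCircle) '' A m)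
    hg (fun m ↦ ?_) (fun m ↦ ?_) (fun m m' hne ↦ ?_) fun i j ↦ ?_
  · exact (isCompact_Icc.inter_right (isClosed_Icc.preimage hG)).image
      (AddCircle.continuous_mk' 1)
  · obtain ⟨x, hx, -⟩ := hcover m a (left_mem_Icc.2 hab)
    exact ⟨_, mem_image_of_mem _ hx⟩
  · refine disjoint_left.2 ?_
    rintro _ ⟨x, hx, rfl⟩ ⟨x', hx', hxx'⟩
    obtain rfl : x' = x := injOn_coe_unitAddCircle_Icc hb hx'.1 hx.1 hxx'
    have hlt : (m : ℝ) < m' + 1 := by linarith [hx.2.1, hx'.2.2]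
    have hlt' : (m' : ℝ) < m + 1 := by linarith [hx'.2.1, hx.2.2]
    exact hne (Subtype.ext (le_antisymm (Int.lt_add_one_iff.1 (by exact_mod_cast hlt))
      (Int.lt_add_one_iff.1 (by exact_mod_cast hlt'))))
  · rintro _ ⟨y, hy, rfl⟩
    obtain ⟨x, hx, hxy⟩ := hcover i y hy.1
    refine ⟨_, mem_image_of_mem _ hx, ?_⟩
    exact (hlift x).symm.trans (hxy ▸ coe_add_intCast_unitAddCircle y i)

variable {d : ℕ} {f β : UnitAddCircle → UnitAddCircle} {F : ℝ → ℝ} {B : ℝ →+c[1, 1] ℝ}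

lemma coe_log_natCast (hd : d ≠ 0) : ((Real.log d : ℝ) : EReal) = ENNReal.log d := by
  rw [← ENNReal.ofReal_natCast, ENNReal.log_ofReal_of_pos (by positivity)]

lemma log_lt_coverEntropy_of_not_monotone (hd : 1 < d) (hf : Continuous f) (hF : Continuous F)
    (hlift : Semiconj ((↑) : ℝ → UnitAddCircle) F f) (hB : Continuous B)
    (h : Semiconj B F (d * ·)) (hmono : ¬ Monotone B) :
    (Real.log d : EReal) < coverEntropy f univ := by
  rw [coe_log_natCast (by lia)]
  obtain ⟨a, b, hab, hba, hlt⟩ := exists_map_add_one_lt_of_not_monotone hB hmono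
  obtain ⟨n, hn, hn₀⟩ := ((eventually_iterate_add_le (c := d) (by exact_mod_cast hd) hB h hlt 2).and
    (eventually_ne_atTop 0)).exists
  set s : Finset ℤ := Finset.Icc ⌈F^[n] a - a⌉ ⌊F^[n] b - b⌋
  have hs : ∀ m ∈ s, Icc (a + m) (b + m) ⊆ F^[n] '' Icc a b := fun m hm ↦ by
    obtain ⟨hma, hmb⟩ := Finset.mem_Icc.1 hm
    rw [Int.ceil_le] at hma
    rw [Int.le_floor] at hmb
    exact (Icc_subset_Icc (by linarith) (by linarith)).trans
      (intermediate_value_Icc hab.le (hF.iterate n).continuousOn)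
  have hcard : d ^ n < s.card := by
    have ha := Int.ceil_lt_add_one (F^[n] a - a)
    have hb := Int.sub_one_lt_floor (F^[n] b - b)
    have hle : ((⌊F^[n] b - b⌋ + 1 - ⌈F^[n] a - a⌉ : ℤ) : ℝ) ≤ s.card := by
      rw [Int.card_Icc]
      exact_mod_cast Int.self_le_toNat _
    push_cast at hle
    rw [← Nat.cast_lt (α := ℝ), Nat.cast_pow]
    linarith
  have hlog : n * ENNReal.log d < n * coverEntropy f univ := calc
    n * ENNReal.log d = ENNReal.log (d ^ n) := ENNReal.log_pow.symm
    _ < ENNReal.log s.card := ENNReal.log_lt_log (by exact_mod_cast hcard)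
    _ ≤ coverEntropy f^[n] univ := log_card_le_coverEntropy_of_Icc_subset_image (hf.iterate n)
      (hF.iterate n) (hlift.iterate_right n) hab.le hba hs
    _ ≤ n * coverEntropy f univ := coverEntropy_iterate_le f univ hn₀
  contrapose! hlog
  gcongr

lemma coverEntropy_le_log_of_injective (hd : 1 ≤ d) (hβ : Continuous β) (h : Semiconj β f (d • ·))
    (hinj : Injective β) : coverEntropy f univ ≤ (Real.log d : EReal) := by
  rw [coe_log_natCast (by lia)]
  exact (coverEntropy_le_of_semiconj_of_injective hβ hinj h).trans
    (coverEntropy_le_log_of_lipschitzWith (lipschitzWith_nsmul d) (by exact_mod_cast hd))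

end CircleHorseshoe

section Recurrence

open Filter Function Set

lemma isGδ_setOf_frequently_mem {X Y : Type*} [TopologicalSpace X] [TopologicalSpace Y]
    {g : ℕ → X → Y} (hg : ∀ n, Continuous (g n)) {U : Set Y} (hU : IsOpen U) :
    IsGδ {x | ∃ᶠ n in atTop, g n x ∈ U} := by
  have heq : {x | ∃ᶠ n in atTop, g n x ∈ U} = ⋂ m, ⋃ n, ⋃ _ : m ≤ n, g n ⁻¹' U := by
    ext x
    simp [frequently_atTop]
  rw [heq]
  exact .iInter_of_isOpen fun m ↦ isOpen_iUnion fun n ↦ isOpen_iUnion fun _ ↦ hU.preimage (hg n)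

lemma ae_frequently_iterate_mem {X : Type*} [MeasurableSpace X] {μ : Measure X}
    [IsFiniteMeasure μ] {T : X → X} (hT : Ergodic T μ) {s : Set X} (hs : MeasurableSet s)
    (hμs : μ s ≠ 0) : ∀ᵐ x ∂μ, ∃ᶠ n in atTop, T^[n] x ∈ s := by
  set Λ : Set X := {x | ∃ᶠ n in atTop, T^[n] x ∈ s}
  have hΛ : MeasurableSet Λ := by
    have hlim : limsup (fun n ↦ T^[n] ⁻¹' s) atTop = Λ :=
      Set.ext fun _ ↦ mem_limsup_iff_frequently_mem
    exact hlim ▸ .measurableSet_limsup fun n ↦ hT.measurable.iterate n hs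
  have hinv : T ⁻¹' Λ = Λ := by
    ext x
    change (∃ᶠ n in atTop, T^[n + 1] x ∈ s) ↔ ∃ᶠ n in atTop, T^[n] x ∈ s
    rw [← frequently_map (m := (· + 1)) (P := fun n ↦ T^[n] x ∈ s), map_add_atTop_eq_nat]
  refine (hT.toPreErgodic.ae_mem_or_ae_notMem hΛ hinv).resolve_right fun hnot ↦ hμs ?_
  have hrec := hT.toMeasurePreserving.conservative.ae_mem_imp_frequently_image_mem
    hs.nullMeasurableSet
  refine measure_eq_zero_iff_ae_notMem.2 ?_
  filter_upwards [hrec, hnot] with x hx hxΛ hxs using hxΛ (hx hxs)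

end Recurrence

section UncountableFibers

open Filter Function Set
open scoped AddConstMap

variable {d : ℕ} {β : UnitAddCircle → UnitAddCircle} {F : ℝ → ℝ} {B : ℝ →+c[1, 1] ℝ}

lemma exists_dense_isGδ_forall_not_countable_fiber (hd : 1 < d) (hF : Continuous F)
    (hB : Continuous B) (hlift : Semiconj ((↑) : ℝ → UnitAddCircle) B β) (h : Semiconj B F (d * ·))
    (hmono : ¬ Monotone B) :
    ∃ Λ : Set UnitAddCircle, Dense Λ ∧ IsGδ Λ ∧ volume Λᶜ = 0 ∧
      ∀ θ ∈ Λ, ¬ (β ⁻¹' {θ}).Countable := by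
  obtain ⟨p, q, hpq, J, hdisj, hJ⟩ := exists_disjoint_overlapping_branches hB hmono
  obtain ⟨e, he, hpe⟩ : ∃ e > 0, p + e < q - e := ⟨(q - p) / 3, by linarith, by linarith⟩
  set U : Set UnitAddCircle := (↑) '' Ioo (p + e) (q - e)
  have hU : IsOpen U := QuotientAddGroup.isOpenMap_coe _ isOpen_Ioo
  have hrec := ae_frequently_iterate_mem (AddCircle.ergodic_nsmul hd) hU.measurableSet
    (hU.measure_pos volume ((nonempty_Ioo.2 hpe).image _)).ne'
  refine ⟨_, Measure.dense_of_ae hrec,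
    isGδ_setOf_frequently_mem (fun n ↦ (continuous_nsmul d).iterate n) hU, hrec,
    fun θ hθ hcount ↦ ?_⟩
  obtain ⟨t, rfl⟩ := QuotientAddGroup.mk_surjective θ
  refine not_countable_fiber_of_frequently (by exact_mod_cast hd) hF hB h hdisj hJ he (T := t)
    (hθ.mono ?_) ((mapsTo_coe_fiber hlift t).countable_of_injOn (injOn_coe_fiber t) hcount)
  rintro n ⟨z, hz, hzn⟩
  rw [smul_iterate_apply] at hzn
  obtain ⟨k, rfl⟩ := coe_unitAddCircle_eq_coe_iff.1 (hzn.trans (AddCircle.coe_nsmul ..).symm)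
  exact ⟨-k, by simpa using Ioo_subset_Icc_self hz⟩

end UncountableFibers

/-- For a continuous degree-`d` circle map `f` (with lift `F`) admitting a light
semiconjugacy `β` (with degree-one lift `B`) onto `θ ↦ dθ`, the following are equivalent:
(a) `F` is not injective; (b) `β` is not injective; (c) there is a dense, full measure
`G_δ`-set `Λ` of points whose `β`-fibers are totally disconnected and uncountable;
(d) `h_top(f) > log d`; (e) on every nondegenerate closed arc the (lift of the)
semiconjugacy `β` is not of bounded variation. -/
theorem stmt19 (d : ℕ) (hd : 2 ≤ d)
    (f : UnitAddCircle → UnitAddCircle) (hf : Continuous f)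
    (F : ℝ → ℝ) (hFcont : Continuous F)
    (hFlift : ∀ x : ℝ, ((F x : ℝ) : UnitAddCircle) = f (x : UnitAddCircle))
    (hFdeg : ∀ x : ℝ, F (x + 1) = F x + d)
    (β : UnitAddCircle → UnitAddCircle) (hβcont : Continuous β)
    (B : ℝ → ℝ) (hBcont : Continuous B)
    (hBlift : ∀ x : ℝ, ((B x : ℝ) : UnitAddCircle) = β (x : UnitAddCircle))
    (hBdeg : ∀ x : ℝ, B (x + 1) = B x + 1)
    (hsemi : ∀ θ : UnitAddCircle, β (f θ) = (d : ℤ) • β θ)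
    (hlight : ∀ θ : UnitAddCircle, IsTotallyDisconnected (β ⁻¹' {θ})) :
    List.TFAE [
      ¬ Function.Injective F,
      ¬ Function.Injective β,
      ∃ Λ : Set UnitAddCircle, Dense Λ ∧ IsGδ Λ ∧ volume Λᶜ = 0 ∧
        ∀ θ ∈ Λ, IsTotallyDisconnected (β ⁻¹' {θ}) ∧ ¬ (β ⁻¹' {θ}).Countable,
      (Real.log d : EReal) < Dynamics.coverEntropy f Set.univ,
      ∀ a c : ℝ, a < c → c - a ≤ 1 → ¬ BoundedVariationOn B (Set.Icc a c)
    ] := by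
  obtain ⟨B, rfl⟩ : ∃ B' : AddConstMap ℝ ℝ 1 1, B' = B := ⟨⟨B, hBdeg⟩, rfl⟩
  replace hsemi : Function.Semiconj β f (d • ·) := fun θ ↦ (hsemi θ).trans (natCast_zsmul _ _)
  have hlightB : IsLight B := IsLight.of_lift hlight hBlift
  obtain ⟨F₀, hF₀, hF₀lift, hBF₀, hFF₀⟩ :=
    exists_lift_semiconj ⟨F, hFdeg⟩ hFcont hFlift hBcont hBlift hsemi
  have hF : Function.Injective F ↔ Monotone B := hFF₀.symm.trans <|
    injective_iff_monotone_of_semiconj (by exact_mod_cast hd) F₀ hF₀ hBcont hlightB hBF₀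
  have hβ : Function.Injective β ↔ Monotone B :=
    (injective_iff_injective_lift hBlift).trans (injective_iff_monotone hBcont hlightB)
  tfae_have 1 ↔ 2 := not_congr (hF.trans hβ.symm)
  tfae_have 2 → 3 := fun hinj ↦
    let ⟨Λ, hdense, hGδ, hnull, hfib⟩ := exists_dense_isGδ_forall_not_countable_fiber hd hF₀ hBcont
      hBlift hBF₀ (mt hβ.2 hinj)
    ⟨Λ, hdense, hGδ, hnull, fun θ hθ ↦ ⟨hlight θ, hfib θ hθ⟩⟩
  tfae_have 3 → 2 := fun ⟨_, hdense, _, _, hfib⟩ hinj ↦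
    let ⟨θ, hθ⟩ := hdense.nonempty
    (hfib θ hθ).2 (Set.subsingleton_singleton.preimage hinj).countable
  tfae_have 2 → 4 := fun hinj ↦
    log_lt_coverEntropy_of_not_monotone hd hf hF₀ hF₀lift hBcont hBF₀ (mt hβ.2 hinj)
  tfae_have 4 → 2 := fun hlog hinj ↦
    hlog.not_ge (coverEntropy_le_log_of_injective (by lia) hβcont hsemi hinj)
  tfae_have 2 ↔ 5 := by
    rw [hβ, monotone_iff_exists_boundedVariationOn hd hF₀ hBcont hBF₀ hlightB]
    simp only [not_exists, not_and]
  tfae_finish
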